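/- arXiv:math/9912249 — 7 statements merged into one kernel-verified Lean document; each statement's English description precedes it below -/
import Mathlib

section
/- If k > 1/2, j ≥ 0, and X ⊆ ℝ, then, as sums with values in [0,∞], S_E(j,k,X) ≤ R_E(j,k,X) ≤ ζ(2k)·S_E(j,k,X), where ζ is the Riemann zeta function. -/
noncomputable section

/-- `F(u,v) = v·(u³ + au²v + buv² + cv³) = v⁴ f(u/v)`. -/
def Fbin (a b c u v : ℤ) : ℤ := v * (u^3 + a*u^2*v + b*u*v^2 + c*v^3)

/-- `Ψ = {(u,v) ∈ ℤ² : gcd(u,v) = 1 and F(u,v) ≠ 0}`. -/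
def Psi (a b c : ℤ) : Set (ℤ × ℤ) := {p | Int.gcd p.1 p.2 = 1 ∧ Fbin a b c p.1 p.2 ≠ 0}

/-- `h(u/v) = max(1, log|u|, log|v|)` for coprime `u, v`. -/
def ht (u v : ℤ) : ℝ := max 1 (max (Real.log |(u : ℝ)|) (Real.log |(v : ℝ)|))

/-- the polynomial `f(x) = x³ + ax² + bx + c` has three distinct complex roots. -/
def DistinctRoots (a b c : ℤ) : Prop :=
  ∃ r₁ r₂ r₃ : ℂ, r₁ ≠ r₂ ∧ r₁ ≠ r₃ ∧ r₂ ≠ r₃ ∧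
    ∀ z : ℂ, z^3 + a*z^2 + b*z + c = (z - r₁) * (z - r₂) * (z - r₃)

/-- `sq` is a squarefree-part function: for nonzero `n`, `sq n` is squarefree and
`n = sq n · m²` for some rational `m`. -/
def IsSqfreePart (sq : ℤ → ℤ) : Prop :=
  ∀ n : ℤ, n ≠ 0 → Squarefree (sq n) ∧ ∃ m : ℚ, (n : ℚ) = sq n * m^2

/-- the general term `|s(F(u,v))|^{-k} · h(u/v)^{-j}` of `S_E(j,k)`. -/
def STerm (a b c : ℤ) (sq : ℤ → ℤ) (j k : ℝ) (p : ℤ × ℤ) : ℝ :=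
  |(sq (Fbin a b c p.1 p.2) : ℝ)| ^ (-k) * ht p.1 p.2 ^ (-j)

/-- index set of `S_E(j,k,X)`: `(u,v) ∈ Ψ` with `u/v ∈ X`. -/
def SIdx (a b c : ℤ) (X : Set ℝ) : Set (ℤ × ℤ) :=
  {p | p ∈ Psi a b c ∧ ((p.1 : ℝ) / (p.2 : ℝ)) ∈ X}

/-- `S_E(j,k,X)` converges. -/
def SConv (a b c : ℤ) (sq : ℤ → ℤ) (j k : ℝ) (X : Set ℝ) : Prop :=
  Summable fun p : SIdx a b c X => STerm a b c sq j k p.1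

/-- index set of `R_E(j,k,X)`: `t ≥ 1`, `(u,v) ∈ Ψ`, `u/v ∈ X`, `t² ∣ F(u,v)`. -/
def RIdx (a b c : ℤ) (X : Set ℝ) : Set (ℕ × ℤ × ℤ) :=
  {q | 1 ≤ q.1 ∧ q.2 ∈ Psi a b c ∧ ((q.2.1 : ℝ) / (q.2.2 : ℝ)) ∈ X ∧
    (q.1 : ℤ)^2 ∣ Fbin a b c q.2.1 q.2.2}

/-- the general term `t^{2k} · |F(u,v)|^{-k} · h(u/v)^{-j}` of `R_E(j,k)`. -/
def RTerm (a b c : ℤ) (j k : ℝ) (q : ℕ × ℤ × ℤ) : ℝ :=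
  (q.1 : ℝ) ^ (2*k) * |(Fbin a b c q.2.1 q.2.2 : ℝ)| ^ (-k) * ht q.2.1 q.2.2 ^ (-j)

/-- `R_E(j,k,X)` converges. -/
def RConv (a b c : ℤ) (j k : ℝ) (X : Set ℝ) : Prop :=
  Summable fun q : RIdx a b c X => RTerm a b c j k q.1

/-- `Ω_d = {α ∈ ℤ/d²ℤ : f(α) ≡ 0 (mod d²)}`. -/
def OmegaSet (a b c : ℤ) (d : ℕ) : Set (ZMod (d^2)) :=
  {α | α^3 + (a : ZMod (d^2))*α^2 + (b : ZMod (d^2))*α + (c : ZMod (d^2)) = 0}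

/-- the lattice `L_{α,d,d'} = {(u,v) : u ≡ αv (mod d²), v ≡ 0 (mod d'²)}`. -/
def latL (d d' : ℕ) (α : ZMod (d^2)) : Set (ℤ × ℤ) :=
  {p | ((p.1 : ZMod (d^2)) = α * (p.2 : ZMod (d^2))) ∧ ((d' : ℤ))^2 ∣ p.2}

/-- `ω` is a choice, for coprime `d, d' ≥ 1` and `α ∈ Ω_d`, of a shortest nonzero
vector `ω_{α,d,d'}` of the lattice `L_{α,d,d'}` for the Euclidean norm. -/
def IsShortestChoice (a b c : ℤ) (ω : (d d' : ℕ) → ZMod (d^2) → ℤ × ℤ) : Prop :=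
  ∀ d d' : ℕ, 0 < d → 0 < d' → Nat.Coprime d d' → ∀ α ∈ OmegaSet a b c d,
    ω d d' α ∈ latL d d' α ∧ ω d d' α ≠ 0 ∧
    ∀ p ∈ latL d d' α, p ≠ 0 →
      (ω d d' α).1^2 + (ω d d' α).2^2 ≤ p.1^2 + p.2^2

/-- index set of `Q_E(j,k)`: coprime `d, d' ≥ 1`, `α ∈ Ω_d`, `ω_{α,d,d'} ∈ Ψ`. -/
def QIdx (a b c : ℤ) (ω : (d d' : ℕ) → ZMod (d^2) → ℤ × ℤ) :
    Set (Σ d : ℕ, ℕ × ZMod (d^2)) :=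
  {x | 0 < x.1 ∧ 0 < x.2.1 ∧ Nat.Coprime x.1 x.2.1 ∧ x.2.2 ∈ OmegaSet a b c x.1 ∧
    ω x.1 x.2.1 x.2.2 ∈ Psi a b c}

/-- the general term `(dd')^{2k} · max(1, log(dd'))^{-j} · ‖ω_{α,d,d'}‖^{-4k}` of `Q_E(j,k)`. -/
def QTerm (j k : ℝ) (ω : (d d' : ℕ) → ZMod (d^2) → ℤ × ℤ)
    (x : Σ d : ℕ, ℕ × ZMod (d^2)) : ℝ :=
  ((x.1 : ℝ) * (x.2.1 : ℝ)) ^ (2*k) * max 1 (Real.log ((x.1 : ℝ) * (x.2.1 : ℝ))) ^ (-j) *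
    Real.sqrt (((ω x.1 x.2.1 x.2.2).1 : ℝ)^2 + ((ω x.1 x.2.1 x.2.2).2 : ℝ)^2) ^ (-(4*k))

/-- `Q_E(j,k)` converges. -/
def QConv (a b c : ℤ) (j k : ℝ) (ω : (d d' : ℕ) → ZMod (d^2) → ℤ × ℤ) : Prop :=
  Summable fun x : QIdx a b c ω => QTerm j k ω x.1

/-- the quadratic twist `E^{(D)} : Dy² = f(x)`, in Weierstrass form
`y² = x³ + aDx² + bD²x + cD³` (isomorphic via `(x,y) ↦ (Dx, D²y)`). -/
def twist (a b c D : ℤ) : WeierstrassCurve.Affine ℚ :=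
  { a₁ := 0, a₂ := a*D, a₃ := 0, a₄ := b*D^2, a₆ := c*D^3 }

/-- `rank_ℤ E^{(D)}(ℚ) < 2j` for every nonzero integer `D`: there is no
ℤ-linearly independent family of `⌈2j⌉` rational points on `E^{(D)}`. -/
def RankBound (a b c : ℤ) (j : ℝ) : Prop :=
  ∀ D : ℤ, D ≠ 0 →
    ¬ ∃ P : Fin ⌈2*j⌉₊ → (twist a b c D).Point, LinearIndependent ℤ P

/-- `X ⊆ ℝ` is broad: open, and meets both `(e_max, ∞)` and `(-∞, e_min)`. -/
def Broad (a b c : ℤ) (X : Set ℝ) : Prop :=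
  IsOpen X ∧ (∃ x ∈ X, ∀ r : ℝ, r^3 + a*r^2 + b*r + c = 0 → r < x) ∧
    (∃ x ∈ X, ∀ r : ℝ, r^3 + a*r^2 + b*r + c = 0 → x < r)

/-- the set of triples `(α, d, d')` with `d, d'` coprime positive integers,
`dd' = t`, and `α ∈ Ω_d`. -/
def TripSet (a b c : ℤ) (t : ℕ) : Set (Σ d : ℕ, ℕ × ZMod (d^2)) :=
  {x | 0 < x.1 ∧ 0 < x.2.1 ∧ Nat.Coprime x.1 x.2.1 ∧ x.1 * x.2.1 = t ∧
    x.2.2 ∈ OmegaSet a b c x.1}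

end

theorem aux_int (s n : ℤ) (hs : Squarefree s) (q : ℚ) (h : (n : ℚ) = s * q^2) : q.den = 1 := by
  have hd : (q.den : ℚ) ≠ 0 := by exact_mod_cast q.den_nz
  have h1 : (n : ℚ) * (q.den : ℚ)^2 = s * (q.num : ℚ)^2 := by
    have h2 : q * q.den = q.num := Rat.mul_den_eq_num q
    rw [h, ← h2]; ring
  have h3 : n * (q.den : ℤ)^2 = s * q.num^2 := by exact_mod_cast h1
  have hc : IsCoprime ((q.den : ℤ)^2) (q.num^2) := by
    apply IsCoprime.pow
    rw [Int.isCoprime_iff_gcd_eq_one]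
    have := q.reduced
    rw [Int.gcd_comm]
    simpa [Int.gcd, Nat.Coprime] using this
  have h4 : (q.den : ℤ)^2 ∣ s := hc.dvd_of_dvd_mul_right ⟨n, by rw [← h3]; ring⟩
  have h5 := hs (q.den : ℤ) (by rwa [← sq])
  simpa [Int.isUnit_iff_natAbs_eq] using h5

theorem aux_m (sq : ℤ → ℤ) (hsq : IsSqfreePart sq) (n : ℤ) (hn : n ≠ 0) :
    ∃ m : ℕ, 0 < m ∧ n = sq n * (m : ℤ)^2 ∧ ∀ t : ℕ, 1 ≤ t → (t : ℤ)^2 ∣ n → t ∣ m := by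
  obtain ⟨hs, q, hq⟩ := hsq n hn
  have hd := aux_int _ _ hs q hq
  have hqn : q = q.num := by
    conv_lhs => rw [← Rat.num_div_den q]
    rw [hd]; simp
  have hn2 : n = sq n * (q.num.natAbs : ℤ)^2 := by
    rw [Int.natAbs_sq]
    rw [hqn] at hq
    exact_mod_cast hq
  refine ⟨q.num.natAbs, ?_, hn2, ?_⟩
  · rcases Nat.eq_zero_or_pos q.num.natAbs with h | h
    · rw [h] at hn2; simp at hn2; exact absurd hn2 hn
    · exact h
  · rintro t ht ⟨e, he⟩
    generalize q.num.natAbs = m at *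
    have ht0 : (t : ℚ) ≠ 0 := by positivity
    have h1 : (e : ℚ) = sq n * ((m : ℚ) / t)^2 := by
      have h2 : (t : ℚ)^2 * e = sq n * (m : ℚ)^2 := by
        rw [he] at hn2
        rw [← he] at hn2
        have : (t : ℤ)^2 * e = sq n * (m : ℤ)^2 := by rw [← he]; exact hn2
        exact_mod_cast this
      field_simp
      linarith
    have h3 := aux_int _ _ hs _ h1
    have h4 : ((m : ℚ) / t) = (((m : ℚ) / t).num : ℚ) := by
      conv_lhs => rw [← Rat.num_div_den ((m : ℚ) / t)]
      rw [h3]; simp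
    rw [div_eq_iff ht0] at h4
    have h5 : (m : ℤ) = ((m : ℚ) / t).num * t := by exact_mod_cast h4
    have : (t : ℤ) ∣ m := ⟨_, by rw [mul_comm]; exact h5⟩
    exact_mod_cast this

theorem aux_term (s : ℤ) (t d : ℕ) (ht : 0 < t) (hd : 0 < d) (k : ℝ) :
    (t : ℝ)^(2*k) * |((s * ((t * d : ℕ) : ℤ)^2 : ℤ) : ℝ)| ^ (-k)
      = 1 / (d : ℝ)^(2*k) * |(s : ℝ)|^(-k) := by
  have ht' : (0 : ℝ) < t := by exact_mod_cast ht
  have hd' : (0 : ℝ) < d := by exact_mod_cast hd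
  push_cast
  rw [abs_mul, abs_of_nonneg (sq_nonneg ((t : ℝ) * d)), Real.mul_rpow (abs_nonneg _) (by positivity),
    ← Real.rpow_natCast, ← Real.rpow_mul (by positivity), Real.mul_rpow ht'.le hd'.le]
  have : ((2 : ℕ) : ℝ) * -k = -(2*k) := by push_cast; ring
  rw [this, Real.rpow_neg ht'.le, Real.rpow_neg hd'.le]
  have := Real.rpow_pos_of_pos ht' (2*k)
  have := Real.rpow_pos_of_pos hd' (2*k)
  field_simp

theorem aux_zeta (k : ℝ) (hk : 1/2 < k) :
    ∑' n : ℕ, ENNReal.ofReal (1 / (n : ℝ)^(2*k)) = ENNReal.ofReal ((riemannZeta ((2*k : ℝ) : ℂ)).re) := by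
  have hs : Summable (fun n : ℕ => 1 / (n : ℝ)^(2*k)) :=
    Real.summable_one_div_nat_rpow.2 (by linarith)
  rw [← ENNReal.ofReal_tsum_of_nonneg (fun n => by positivity) hs]
  congr 1
  rw [zeta_eq_tsum_one_div_nat_cpow (by rw [Complex.ofReal_re]; linarith)]
  have : ∀ n : ℕ, 1 / (n : ℂ)^((2*k : ℝ) : ℂ) = ((1 / (n : ℝ)^(2*k) : ℝ) : ℂ) := by
    intro n
    rw [Complex.ofReal_div, Complex.ofReal_cpow (Nat.cast_nonneg n)]
    simp
  simp_rw [this]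
  rw [← Complex.ofReal_tsum, Complex.ofReal_re]

/-- **Proposition 10(i).** If `k > 1/2`, `j ≥ 0`, and `X ⊆ ℝ`, then, as sums in `[0,∞]`,
`S_E(j,k,X) ≤ R_E(j,k,X) ≤ ζ(2k)·S_E(j,k,X)`. -/
theorem S_le_R_le_zeta_mul_S (a b c : ℤ) (hf : DistinctRoots a b c)
    (sq : ℤ → ℤ) (hsq : IsSqfreePart sq) (j k : ℝ) (hk : 1/2 < k) (hj : 0 ≤ j)
    (X : Set ℝ) :
    (∑' p : SIdx a b c X, ENNReal.ofReal (STerm a b c sq j k p.1)) ≤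
        (∑' q : RIdx a b c X, ENNReal.ofReal (RTerm a b c j k q.1)) ∧
      (∑' q : RIdx a b c X, ENNReal.ofReal (RTerm a b c j k q.1)) ≤
        ENNReal.ofReal ((riemannZeta ((2*k : ℝ) : ℂ)).re) *
          ∑' p : SIdx a b c X, ENNReal.ofReal (STerm a b c sq j k p.1) := by
  have H : ∀ p : SIdx a b c X, ∃ m : ℕ, 0 < m ∧
      Fbin a b c p.1.1 p.1.2 = sq (Fbin a b c p.1.1 p.1.2) * (m : ℤ)^2 ∧
      ∀ t : ℕ, 1 ≤ t → (t : ℤ)^2 ∣ Fbin a b c p.1.1 p.1.2 → t ∣ m :=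
    fun p => aux_m sq hsq _ p.2.1.2
  choose m hm0 hm hmt using H
  have key : ∀ (p : SIdx a b c X) (t d : ℕ), 0 < t → 0 < d → m p = t * d →
      RTerm a b c j k (t, p.1) = 1 / (d : ℝ)^(2*k) * STerm a b c sq j k p.1 := by
    intro p t d ht hd h
    have h1 := aux_term (sq (Fbin a b c p.1.1 p.1.2)) t d ht hd k
    rw [← h, ← hm p] at h1
    simp only [RTerm, STerm]
    rw [h1, mul_assoc]
  constructor
  · let φ : SIdx a b c X → RIdx a b c X := fun p =>
      ⟨(m p, p.1), hm0 p, p.2.1, p.2.2, ⟨sq (Fbin a b c p.1.1 p.1.2), by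
        rw [mul_comm]; exact hm p⟩⟩
    have hφ : Function.Injective φ := by
      intro p q h
      have := congrArg (fun x => x.1.2) h
      exact Subtype.ext this
    have h1 : ∀ p : SIdx a b c X, ENNReal.ofReal (STerm a b c sq j k p.1)
        = ENNReal.ofReal (RTerm a b c j k (φ p).1) := by
      intro p
      have := key p (m p) 1 (hm0 p) one_pos (by simp)
      simp only [φ]
      rw [this]
      simp
    simp_rw [h1]
    exact ENNReal.tsum_comp_le_tsum_of_injective hφ
      (fun q : RIdx a b c X => ENNReal.ofReal (RTerm a b c j k q.1))
  · let π : RIdx a b c X → SIdx a b c X := fun q => ⟨q.1.2, q.2.2.1, q.2.2.2.1⟩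
    have hdv : ∀ q : RIdx a b c X, q.1.1 ∣ m (π q) := fun q => hmt (π q) _ q.2.1 q.2.2.2.2
    let ψ : RIdx a b c X → ℕ × SIdx a b c X := fun q => (m (π q) / q.1.1, π q)
    have hd0 : ∀ q : RIdx a b c X, 0 < m (π q) / q.1.1 := fun q =>
      Nat.div_pos (Nat.le_of_dvd (hm0 _) (hdv q)) q.2.1
    have hψ : Function.Injective ψ := by
      intro p q h
      have h2 : π p = π q := congrArg Prod.snd h
      have h1 : m (π p) / p.1.1 = m (π q) / q.1.1 := congrArg Prod.fst h
      have hp := Nat.div_mul_cancel (hdv p)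
      have hq := Nat.div_mul_cancel (hdv q)
      have h3 : p.1.1 = q.1.1 := by
        apply Nat.eq_of_mul_eq_mul_left (hd0 p)
        rw [hp, h1, hq, h2]
      have h4 : p.1.2 = q.1.2 := congrArg Subtype.val h2
      exact Subtype.ext (Prod.ext h3 h4)
    let G : ℕ × SIdx a b c X → ENNReal := fun x =>
      ENNReal.ofReal (1 / (x.1 : ℝ)^(2*k)) * ENNReal.ofReal (STerm a b c sq j k x.2.1)
    have h1 : ∀ q : RIdx a b c X, ENNReal.ofReal (RTerm a b c j k q.1) = G (ψ q) := by
      intro q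
      have := key (π q) q.1.1 (m (π q) / q.1.1) q.2.1 (hd0 q) (Nat.mul_div_cancel' (hdv q)).symm
      have h2 : RTerm a b c j k q.1 = RTerm a b c j k (q.1.1, (π q).1) := rfl
      rw [h2, this, ENNReal.ofReal_mul (by positivity)]
    simp_rw [h1]
    refine (ENNReal.tsum_comp_le_tsum_of_injective hψ G).trans (le_of_eq ?_)
    rw [← aux_zeta k hk, ENNReal.tsum_prod (f := fun n p => G (n, p))]
    simp only [G]
    simp_rw [ENNReal.tsum_mul_left]
    rw [ENNReal.tsum_mul_right]
end

section
/- If k > 1/2, j ≥ 0, and X ⊆ ℝ, then the family defining R_E(j,k,X) is summable if and only if the family defining S_E(j,k,X) is summable. -/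
theorem sqf_aux (s t M : ℕ) (hs : Squarefree s) (hM : 0 < M) (h : t^2 ∣ s * M^2) : t ∣ M := by
  obtain ⟨g, t', M', hg, hco, rfl, rfl⟩ := Nat.exists_coprime' (m := t) (n := M) (Nat.gcd_pos_of_pos_right _ hM)
  have h1 : t'^2 ∣ s * M'^2 := by
    rw [mul_pow, mul_pow, ← mul_assoc] at h
    exact Nat.dvd_of_mul_dvd_mul_right (by positivity) h
  have h2 : t'^2 ∣ s := (Nat.Coprime.pow 2 2 hco).dvd_of_dvd_mul_right h1
  have h3 := hs t' (by rwa [← sq])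
  rw [Nat.isUnit_iff] at h3
  subst h3
  exact Nat.mul_dvd_mul (one_dvd _) dvd_rfl

theorem sqf_key (n s : ℤ) (hn : n ≠ 0) (hs : Squarefree s) (hm : ∃ m : ℚ, (n : ℚ) = s * m^2) :
    ∃ M : ℕ, 0 < M ∧ n = s * (M:ℤ)^2 ∧ ∀ t : ℕ, (t:ℤ)^2 ∣ n → t ∣ M := by
  obtain ⟨m, hm⟩ := hm
  have hs' : Squarefree s.natAbs := Int.squarefree_natAbs.mpr hs
  have hm0 : m ≠ 0 := by
    rintro rfl
    apply hn
    have : (n:ℚ) = 0 := by rw [hm]; ring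
    exact_mod_cast this
  have e : n * (m.den:ℤ)^2 = s * m.num^2 := by
    have hd : (m.den:ℚ) ≠ 0 := by exact_mod_cast m.den_nz
    have h1 : (n:ℚ) * (m.den:ℚ)^2 = s * (m.num:ℚ)^2 := by
      rw [hm]
      have := Rat.mul_den_eq_num m
      rw [← this]; ring
    exact_mod_cast h1
  have hnum : 0 < m.num.natAbs := Int.natAbs_pos.mpr (Rat.num_ne_zero.mpr hm0)
  have e' := congrArg Int.natAbs e
  simp only [Int.natAbs_mul, Int.natAbs_pow, Int.natAbs_natCast] at e'
  have hd : m.den ∣ m.num.natAbs := sqf_aux s.natAbs _ _ hs' hnum (e' ▸ Dvd.intro_left _ rfl)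
  have hd1 : m.den = 1 := by
    have := m.reduced
    exact Nat.eq_one_of_dvd_one (by rw [← this.gcd_eq_one]; exact Nat.dvd_gcd hd dvd_rfl)
  rw [hd1] at e
  have e2 : n = s * (m.num.natAbs:ℤ)^2 := by
    rw [Int.natAbs_sq]; simpa using e
  refine ⟨m.num.natAbs, hnum, e2, fun t ht => ?_⟩
  apply sqf_aux s.natAbs _ _ hs' hnum
  have := Int.natAbs_dvd_natAbs.mpr ht
  rw [e2] at this
  simpa [Int.natAbs_mul, Int.natAbs_pow] using this

theorem ht_pos (u v : ℤ) : 0 < ht u v := lt_of_lt_of_le one_pos (le_max_left _ _)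

theorem term_aux (n s : ℤ) (M t d : ℕ) (k : ℝ) (ht : 0 < t) (hd : 0 < d) (hM : M = t * d)
    (hn : n = s * (M:ℤ)^2) :
    (t:ℝ)^(2*k) * |(n:ℝ)|^(-k) = (d:ℝ)^(-(2*k)) * |(s:ℝ)|^(-k) := by
  have ht' : (0:ℝ) < t := by exact_mod_cast ht
  have hd' : (0:ℝ) < d := by exact_mod_cast hd
  subst hn hM
  push_cast
  rw [abs_mul, abs_of_pos (by positivity : (0:ℝ) < ((t:ℝ)*d)^2),
    Real.mul_rpow (abs_nonneg _) (by positivity), ← Real.rpow_natCast, ← Real.rpow_mul (by positivity),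
    Real.mul_rpow ht'.le hd'.le]
  push_cast
  rw [show (2:ℝ) * -k = -(2*k) by ring, Real.rpow_neg ht'.le (2*k)]
  have := (Real.rpow_pos_of_pos ht' (2*k)).ne'
  field_simp

/-- **Proposition 10(ii).** If `k > 1/2`, `j ≥ 0`, and `X ⊆ ℝ`, then `R_E(j,k,X)`
is summable if and only if `S_E(j,k,X)` is summable. -/
theorem RConv_iff_SConv (a b c : ℤ) (hf : DistinctRoots a b c)
    (sq : ℤ → ℤ) (hsq : IsSqfreePart sq) (j k : ℝ) (hk : 1/2 < k) (hj : 0 ≤ j)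
    (X : Set ℝ) :
    RConv a b c j k X ↔ SConv a b c sq j k X := by
  have key : ∀ p : ℤ × ℤ, ∃ M : ℕ, p ∈ Psi a b c → 0 < M ∧
      Fbin a b c p.1 p.2 = sq (Fbin a b c p.1 p.2) * (M:ℤ)^2 ∧
      ∀ t : ℕ, (t:ℤ)^2 ∣ Fbin a b c p.1 p.2 → t ∣ M := by
    intro p
    by_cases hp : p ∈ Psi a b c
    · obtain ⟨M, hM⟩ := sqf_key _ _ hp.2 (hsq _ hp.2).1 (hsq _ hp.2).2
      exact ⟨M, fun _ => hM⟩
    · exact ⟨0, fun h => absurd h hp⟩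
  choose M hM using key
  unfold RConv SConv
  constructor
  · intro h
    let i : SIdx a b c X → RIdx a b c X := fun p =>
      ⟨(M p.1, p.1), (hM p.1 p.2.1).1, p.2.1, p.2.2, by
        have := (hM p.1 p.2.1).2.1
        exact Dvd.intro_left _ this.symm⟩
    have hi : Function.Injective i := by
      intro p q hpq
      have := congrArg (fun x => x.1.2) hpq
      exact Subtype.ext this
    refine (h.comp_injective hi).congr fun p => ?_
    have h1 := hM p.1 p.2.1
    have := term_aux _ _ (M p.1) (M p.1) 1 k h1.1 one_pos (by simp) h1.2.1
    simp only [Function.comp, RTerm, STerm, i]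
    rw [this]; simp
  · intro h
    have hz : Summable fun d : ℕ => (d:ℝ)^(-(2*k)) :=
      Real.summable_nat_rpow.mpr (by linarith)
    have hprod := hz.mul_of_nonneg h (fun d => by positivity)
      (fun p => mul_nonneg (by positivity) (Real.rpow_nonneg (ht_pos _ _).le _))
    let i : RIdx a b c X → ℕ × SIdx a b c X := fun q =>
      (M q.1.2 / q.1.1, ⟨q.1.2, q.2.2.1, q.2.2.2.1⟩)
    have hd : ∀ q : RIdx a b c X, M q.1.2 = q.1.1 * (M q.1.2 / q.1.1) := fun q =>
      (Nat.mul_div_cancel' ((hM q.1.2 q.2.2.1).2.2 _ q.2.2.2.2)).symm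
    have hpos : ∀ q : RIdx a b c X, 0 < M q.1.2 / q.1.1 := fun q => by
      have h1 := (hM q.1.2 q.2.2.1).1
      rw [hd q] at h1
      exact Nat.pos_of_mul_pos_left h1
    have hi : Function.Injective i := by
      intro p q hpq
      have h2 : p.1.2 = q.1.2 := congrArg (fun x => x.2.1) hpq
      have h1 : M p.1.2 / p.1.1 = M q.1.2 / q.1.1 := congrArg (fun x => x.1) hpq
      have e1 := hd p
      have e2 := hd q
      rw [h1, h2] at e1
      have e3 := e1.symm.trans e2
      exact Subtype.ext (Prod.ext (Nat.eq_of_mul_eq_mul_right (hpos q) e3) h2)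
    refine (hprod.comp_injective hi).congr fun q => ?_
    have := term_aux _ _ _ q.1.1 _ k q.2.1 (hpos q) (hd q) (hM q.1.2 q.2.2.1).2.1
    simp only [Function.comp, RTerm, STerm, i]
    rw [this, mul_assoc]
end

section
/- Suppose (u,v) ∈ Ψ, t is a positive integer, and t² divides F(u,v). Then there exist unique positive integers d, d' and a unique α ∈ Ω_d such that gcd(d,d') = 1, dd' = t, u ≡ αv (mod d²), and v ≡ 0 (mod d'²). -/
lemma aux_coprime (a b c u v : ℤ) (h : IsCoprime u v) :
    IsCoprime v (u^3 + a*u^2*v + b*u*v^2 + c*v^3) := by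
  have h3 : IsCoprime v (u^3) := (h.symm).pow_right
  have : u^3 + a*u^2*v + b*u*v^2 + c*v^3 = u^3 + v * (a*u^2 + b*u*v + c*v^2) := by ring
  rw [this]
  exact h3.add_mul_left_right _

lemma aux_unit (v g : ℤ) (n : ℕ) (h : IsCoprime v g) (hn : (n : ℤ) ∣ g) :
    IsUnit (v : ZMod n) := by
  obtain ⟨x, y, hxy⟩ := h
  have hg : (g : ZMod n) = 0 := (ZMod.intCast_zmod_eq_zero_iff_dvd g n |>.2 hn)
  have := congrArg (fun z : ℤ => (z : ZMod n)) hxy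
  push_cast at this
  rw [hg, mul_zero, add_zero] at this
  exact IsUnit.of_mul_eq_one_right _ this

/-- **Lemma 12.** If `(u,v) ∈ Ψ`, `t ≥ 1`, and `t² ∣ F(u,v)`, then there is a unique
triple `(α, d, d')` with `d, d'` coprime positive integers, `dd' = t`, `α ∈ Ω_d`,
`u ≡ αv (mod d²)`, and `v ≡ 0 (mod d'²)`. -/
theorem exists_unique_triple (a b c : ℤ) (hf : DistinctRoots a b c)
    (u v : ℤ) (huv : (u, v) ∈ Psi a b c) (t : ℕ) (htpos : 0 < t)
    (hdvd : (t : ℤ)^2 ∣ Fbin a b c u v) :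
    ∃! x : Σ d : ℕ, ℕ × ZMod (d^2),
      0 < x.1 ∧ 0 < x.2.1 ∧ Nat.Coprime x.1 x.2.1 ∧ x.1 * x.2.1 = t ∧
        x.2.2 ∈ OmegaSet a b c x.1 ∧
        (u : ZMod (x.1^2)) = x.2.2 * (v : ZMod (x.1^2)) ∧ ((x.2.1 : ℤ))^2 ∣ v := by
  obtain ⟨hg, -⟩ := huv
  have hc : IsCoprime u v := Int.isCoprime_iff_gcd_eq_one.2 hg
  have hvG := aux_coprime a b c u v hc
  unfold Fbin at hdvd
  set G : ℤ := u^3 + a*u^2*v + b*u*v^2 + c*v^3 with hG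
  have hcop : Nat.Coprime v.natAbs G.natAbs := by
    have := Int.isCoprime_iff_gcd_eq_one.1 hvG
    exact this
  have hdn : t^2 ∣ v.natAbs * G.natAbs := by
    have := Int.natAbs_dvd_natAbs.2 hdvd
    simpa [Int.natAbs_mul, Int.natAbs_pow] using this
  have hprod : Nat.gcd t G.natAbs * Nat.gcd t v.natAbs = t := by
    have h1 := Nat.Coprime.gcd_mul t hcop
    rw [Nat.gcd_eq_left ((Dvd.intro_left _ (by ring : t * t = t^2)).trans hdn)] at h1
    rw [mul_comm]; exact h1.symm
  have hD : (Nat.gcd t G.natAbs)^2 ∣ G.natAbs := by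
    have h1 : Nat.Coprime ((Nat.gcd t G.natAbs)^2) v.natAbs :=
      Nat.Coprime.pow_left 2 (hcop.symm.coprime_dvd_left (Nat.gcd_dvd_right _ _))
    exact h1.dvd_of_dvd_mul_left ((pow_dvd_pow_of_dvd (Nat.gcd_dvd_left _ _) 2).trans hdn)
  have hD' : (Nat.gcd t v.natAbs)^2 ∣ v.natAbs := by
    have h1 : Nat.Coprime ((Nat.gcd t v.natAbs)^2) G.natAbs :=
      Nat.Coprime.pow_left 2 (hcop.coprime_dvd_left (Nat.gcd_dvd_right _ _))
    exact h1.dvd_of_dvd_mul_right ((pow_dvd_pow_of_dvd (Nat.gcd_dvd_left _ _) 2).trans hdn)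
  generalize hDe : Nat.gcd t G.natAbs = D at *
  generalize hDe' : Nat.gcd t v.natAbs = D' at *
  have hDG : ((D^2 : ℕ) : ℤ) ∣ G := Int.natCast_dvd.2 hD
  have hu : IsUnit (v : ZMod (D^2)) := aux_unit v G _ hvG hDG
  have hG0 : (G : ZMod (D^2)) = 0 := (ZMod.intCast_zmod_eq_zero_iff_dvd G _).2 hDG
  have hDpos : 0 < D := Nat.pos_of_ne_zero (by rintro rfl; simp at hprod; omega)
  have hDpos' : 0 < D' := Nat.pos_of_ne_zero (by rintro rfl; simp at hprod; omega)
  obtain ⟨w, hw⟩ := hu.exists_left_inv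
  refine ⟨⟨D, D', (u : ZMod (D^2)) * w⟩, ⟨hDpos, hDpos', ?_, hprod, ?_, ?_, ?_⟩, ?_⟩
  · change Nat.Coprime D D'
    rw [← hDe, ← hDe']
    exact ((hcop.symm.coprime_dvd_left (Nat.gcd_dvd_right _ _)).coprime_dvd_right
      (Nat.gcd_dvd_right _ _))
  · simp only [OmegaSet, Set.mem_ofPred_eq]
    rw [hG] at hG0
    push_cast at hG0
    linear_combination w^3 * hG0 - (((a : ZMod (D^2)) * u^2 * w^2) + (b : ZMod (D^2)) * u * w * (w * v + 1) + c * ((w*v)^2 + w * v + 1)) * hw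
  · simp only
    linear_combination (-(u : ZMod (D^2))) * hw
  · simp only
    have : ((D'^2 : ℕ) : ℤ) ∣ v := Int.natCast_dvd.2 hD'
    simpa using this
  · rintro ⟨d, d', α⟩ ⟨h1, h2, h3, h4, h5, h6, h7⟩
    simp only at h1 h2 h3 h4 h5 h6 h7
    have hdG : ((d^2 : ℕ) : ℤ) ∣ G := by
      rw [← ZMod.intCast_zmod_eq_zero_iff_dvd]
      simp only [OmegaSet, Set.mem_ofPred_eq] at h5
      rw [hG]
      push_cast
      rw [h6]
      linear_combination (v : ZMod (d^2))^3 * h5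
    have e1 : d ∣ D := by
      rw [← hDe]
      exact Nat.dvd_gcd (Dvd.intro _ h4) ((dvd_pow_self d two_ne_zero).trans (Int.natCast_dvd.1 hdG))
    have e2 : d' ∣ D' := by
      rw [← hDe']
      refine Nat.dvd_gcd (Dvd.intro_left _ h4) ((dvd_pow_self d' two_ne_zero).trans (Int.natCast_dvd.1 ?_))
      exact_mod_cast h7
    have l1 := Nat.le_of_dvd hDpos e1
    have l2 := Nat.le_of_dvd hDpos' e2
    have q1 : d = D := by
      by_contra hne
      have : d < D := lt_of_le_of_ne l1 hne
      nlinarith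
    subst q1
    have q2 : d' = D' := Nat.eq_of_mul_eq_mul_left h1 (h4.trans hprod.symm)
    subst q2
    have : α = (u : ZMod (d^2)) * w := by
      rw [h6]
      linear_combination (-α) * hw
    rw [this]
end

section
/- For every positive integer t, the set {(u,v) ∈ Ψ : t² divides F(u,v)} is the disjoint union, over pairs of coprime positive integers (d,d') with dd' = t and over α ∈ Ω_d, of the sets Ψ ∩ L_{α,d,d'}. -/
lemma aux_cop_v {d d' : ℕ} {α : ZMod (d^2)} {p : ℤ × ℤ} (hg : Int.gcd p.1 p.2 = 1)
    (h : p ∈ latL d d' α) : Nat.Coprime d p.2.natAbs := by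
  obtain ⟨h1, -⟩ := h
  apply Nat.Coprime.symm
  apply Nat.Coprime.symm
  rw [Nat.coprime_iff_gcd_eq_one]
  have hd1 : ((Nat.gcd d p.2.natAbs : ℕ) : ℤ) ∣ p.2 :=
    Int.natCast_dvd.mpr (Nat.gcd_dvd_right _ _)
  have hd2 : ((Nat.gcd d p.2.natAbs : ℕ) : ℤ) ∣ p.1 := by
    obtain ⟨k, rfl⟩ := ZMod.intCast_surjective α
    have h2 : ((p.1 - k * p.2 : ℤ) : ZMod (d^2)) = 0 := by
      push_cast; rw [h1, sub_self]
    rw [ZMod.intCast_zmod_eq_zero_iff_dvd] at h2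
    have h3 : ((Nat.gcd d p.2.natAbs : ℕ) : ℤ) ∣ p.1 - k * p.2 := by
      refine dvd_trans ?_ h2
      exact_mod_cast (Nat.gcd_dvd_left _ _).trans (dvd_pow_self d two_ne_zero)
    have := dvd_add h3 (hd1.mul_left k)
    simpa using this
  have := Int.dvd_coe_gcd hd2 hd1
  rw [hg] at this
  exact Nat.dvd_one.mp (by exact_mod_cast this)

lemma aux_unit_s8 {d : ℕ} {v : ℤ} (h : Nat.Coprime d v.natAbs) :
    IsUnit (v : ZMod (d^2)) := by
  have h1 : IsCoprime v ((d^2 : ℕ) : ℤ) := by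
    rw [Int.isCoprime_iff_gcd_eq_one]
    have := (Nat.Coprime.pow_left 2 h).symm
    simpa [Int.gcd] using this
  obtain ⟨x, y, hxy⟩ := h1
  have h2 := congrArg (Int.cast : ℤ → ZMod (d^2)) hxy
  rw [Int.cast_add, Int.cast_mul, Int.cast_mul, Int.cast_natCast, ZMod.natCast_self,
    mul_zero, add_zero, Int.cast_one] at h2
  exact IsUnit.of_mul_eq_one (x : ZMod (d^2)) (by rw [mul_comm]; exact h2)

lemma aux_cop_G (a b c : ℤ) {u v : ℤ} (hg : Int.gcd u v = 1) :
    IsCoprime v (u^3 + a*u^2*v + b*u*v^2 + c*v^3) := by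
  have h : IsCoprime v (u^3) := (Int.isCoprime_iff_gcd_eq_one.mpr hg).symm.pow_right
  have := h.add_mul_left_right (a*u^2 + b*u*v + c*v^2)
  have e : u^3 + a*u^2*v + b*u*v^2 + c*v^3 = u^3 + v * (a*u^2 + b*u*v + c*v^2) := by ring
  rw [e]
  exact this

/-- Equation (3): for every `t ≥ 1`, the set `{(u,v) ∈ Ψ : t² ∣ F(u,v)}` is the
disjoint union over coprime `(d, d')` with `dd' = t` and `α ∈ Ω_d` of the sets
`Ψ ∩ L_{α,d,d'}`. -/
theorem psi_eq_disjoint_union (a b c : ℤ) (hf : DistinctRoots a b c)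
    (t : ℕ) (htpos : 0 < t) :
    {p ∈ Psi a b c | (t : ℤ)^2 ∣ Fbin a b c p.1 p.2} =
        (⋃ x : TripSet a b c t, Psi a b c ∩ latL x.1.1 x.1.2.1 x.1.2.2) ∧
      Pairwise (Function.onFun Disjoint
        fun x : TripSet a b c t => Psi a b c ∩ latL x.1.1 x.1.2.1 x.1.2.2) := by
  constructor
  · ext p
    simp only [Set.mem_iUnion, Set.mem_inter_iff, Set.mem_ofPred_eq]
    constructor
    · rintro ⟨hp, hdiv⟩
      have hg := hp.1
      have hc := aux_cop_G a b c hg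
      obtain ⟨u, v⟩ := p
      simp only [Fbin] at hdiv hg hc
      set G := u^3 + a*u^2*v + b*u*v^2 + c*v^3 with hG
      have hcn : Nat.Coprime v.natAbs G.natAbs := Int.isCoprime_iff_nat_coprime.mp hc
      have hdn : t^2 ∣ v.natAbs * G.natAbs := by
        have := Int.natAbs_dvd_natAbs.mpr hdiv
        simpa [Int.natAbs_mul, Int.natAbs_pow] using this
      set d := Nat.gcd t G.natAbs with hd
      set d' := Nat.gcd t v.natAbs with hd'
      have hdG : d ∣ G.natAbs := Nat.gcd_dvd_right _ _
      have hdv : d' ∣ v.natAbs := Nat.gcd_dvd_right _ _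
      have hprod : d * d' = t := by
        have h1 := Nat.Coprime.gcd_mul t hcn
        rw [mul_comm, hd, hd', ← h1]
        exact Nat.gcd_eq_left ((dvd_pow_self t two_ne_zero).trans hdn)
      have hdcv : Nat.Coprime d v.natAbs := Nat.Coprime.coprime_dvd_left hdG hcn.symm
      have hd'G : Nat.Coprime d' G.natAbs := Nat.Coprime.coprime_dvd_left hdv hcn
      have hd2 : d^2 ∣ G.natAbs := by
        have h1 : d^2 ∣ v.natAbs * G.natAbs :=
          (pow_dvd_pow_of_dvd (Nat.gcd_dvd_left _ _) 2).trans hdn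
        exact (Nat.Coprime.pow_left 2 hdcv).dvd_of_dvd_mul_left h1
      have hd'2 : d'^2 ∣ v.natAbs := by
        have h1 : d'^2 ∣ v.natAbs * G.natAbs :=
          (pow_dvd_pow_of_dvd (Nat.gcd_dvd_left _ _) 2).trans hdn
        exact (Nat.Coprime.pow_left 2 hd'G).dvd_of_dvd_mul_right h1
      obtain ⟨w, hw⟩ := (aux_unit_s8 hdcv).exists_right_inv
      have hG0 : ((G : ℤ) : ZMod (d^2)) = 0 := by
        rw [ZMod.intCast_zmod_eq_zero_iff_dvd]
        exact Int.natCast_dvd.mpr hd2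
      refine ⟨⟨⟨d, d', (u : ZMod (d^2)) * w⟩, Nat.gcd_pos_of_pos_left _ htpos,
        Nat.gcd_pos_of_pos_left _ htpos, Nat.Coprime.coprime_dvd_right hdv hdcv, hprod, ?_⟩,
        hp, ?_, ?_⟩
      · simp only [OmegaSet, Set.mem_ofPred_eq]
        rw [hG] at hG0
        push_cast at hG0
        generalize (u : ZMod (d^2)) = U at *
        generalize (v : ZMod (d^2)) = V at *
        generalize (a : ZMod (d^2)) = A at *
        generalize (b : ZMod (d^2)) = B at *
        generalize (c : ZMod (d^2)) = C at *
        have e : (U*w)^3 + A*(U*w)^2 + B*(U*w) + C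
            = w^3 * (U^3 + A*U^2*V + B*U*V^2 + C*V^3) := by
          have e1 : V * w - 1 = 0 := by rw [hw, sub_self]
          linear_combination (-(A*U^2*w^2) - B*U*w*(V*w+1) - C*((V*w)^2+V*w+1)) * e1
        rw [e, hG0, mul_zero]
      · show (u : ZMod (d^2)) = u * w * v
        rw [mul_assoc, mul_comm w, hw, mul_one]
      · show (d' : ℤ)^2 ∣ v
        have := Int.natCast_dvd.mpr hd'2
        exact_mod_cast this
    · rintro ⟨⟨⟨d, d', α⟩, h1, h2, hcop, hprod, hα⟩, hp, hu, hv⟩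
      refine ⟨hp, ?_⟩
      obtain ⟨u, v⟩ := p
      replace hα : α^3 + (a : ZMod (d^2))*α^2 + (b : ZMod (d^2))*α + (c : ZMod (d^2)) = 0 := hα
      replace hu : (u : ZMod (d^2)) = α * (v : ZMod (d^2)) := hu
      replace hv : (d' : ℤ)^2 ∣ v := hv
      replace hprod : d * d' = t := hprod
      simp only [Fbin]
      subst hprod
      push_cast
      rw [mul_pow, mul_comm ((d : ℤ)^2)]
      refine mul_dvd_mul hv ?_
      have : ((u^3 + a*u^2*v + b*u*v^2 + c*v^3 : ℤ) : ZMod (d^2)) = 0 := by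
        push_cast
        rw [hu]
        linear_combination (v : ZMod (d^2))^3 * hα
      rw [ZMod.intCast_zmod_eq_zero_iff_dvd] at this
      exact_mod_cast this
  · rintro ⟨⟨d, d', α⟩, h1, h2, hcop, hprod, hα⟩ ⟨⟨e, e', β⟩, k1, k2, kcop, kprod, hβ⟩ hne
    simp only [Function.onFun]
    rw [Set.disjoint_left]
    rintro p ⟨hp, hl⟩ ⟨-, kl⟩
    apply hne
    replace h2 : 0 < d' := h2
    replace hprod : d * d' = t := hprod
    replace kprod : e * e' = t := kprod
    replace hl : p ∈ latL d d' α := hl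
    replace kl : p ∈ latL e e' β := kl
    have c1 := aux_cop_v hp.1 hl
    have c2 := aux_cop_v hp.1 kl
    have key : ∀ x y : ℕ, Nat.Coprime x p.2.natAbs → ((y : ℤ))^2 ∣ p.2 → x * y = t →
        y = Nat.gcd t p.2.natAbs := by
      intro x y hx hy hxy
      rw [← hxy, Nat.Coprime.gcd_mul_left_cancel _ hx]
      refine (Nat.gcd_eq_left ?_).symm
      exact Int.natCast_dvd.mp ((dvd_pow_self _ two_ne_zero).trans hy)
    have E : d' = e' := (key d d' c1 hl.2 hprod).trans (key e e' c2 kl.2 kprod).symm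
    subst E
    have E2 : d = e := Nat.eq_of_mul_eq_mul_right h2 (hprod.trans kprod.symm)
    subst E2
    have E3 : α = β := (aux_unit_s8 c1).mul_right_cancel (hl.1.symm.trans kl.1)
    subst E3
    rfl
end

section
/- Let D be a nonzero squarefree integer and X ⊆ ℝ. Then the map (u,v) ↦ (u/v, √(F(u,v)/D)/v²) is a bijection from Σ_{D,X} := {(u,v) ∈ Ψ : u/v ∈ X, v > 0, and s(F(u,v)) = D} onto the set {(x,y) ∈ ℚ × ℚ : Dy² = f(x), y > 0, and x ∈ X} (which is in natural bijection with the set of rational points of E^{(D)} that are not 2-torsion and have x-coordinate in X, taken modulo ±1). -/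
theorem sqf_unique (A B : ℤ) (hA : Squarefree A) (hB : Squarefree B) (r : ℚ)
    (h : (A : ℚ) = B * r^2) : A = B := by
  have hA0 : A ≠ 0 := hA.ne_zero
  have h1 : IsSquare ((A * B : ℤ) : ℚ) := ⟨B * r, by push_cast; rw [h]; ring⟩
  rw [Rat.isSquare_intCast_iff] at h1
  obtain ⟨k, hk⟩ := h1
  have hdk : A ∣ k := by
    rw [← hA.dvd_pow_iff_dvd (n := 2) (by norm_num)]
    exact ⟨B, by rw [hk]; ring⟩
  obtain ⟨m, rfl⟩ := hdk
  have hBm : B = A * (m * m) := mul_left_cancel₀ hA0 (by rw [hk]; ring)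
  have hm : IsUnit m := hB m ⟨A, by rw [hBm]; ring⟩
  rw [hBm, Int.isUnit_mul_self hm, mul_one]

theorem Fbin_eq (a b c u v : ℤ) (hv : v ≠ 0) : (Fbin a b c u v : ℚ) =
    (((u : ℚ) / v)^3 + a * ((u : ℚ) / v)^2 + b * ((u : ℚ) / v) + c) * ((v : ℚ)^2)^2 := by
  have : (v : ℚ) ≠ 0 := by exact_mod_cast hv
  unfold Fbin
  push_cast
  field_simp

/-- **Lemma 3.** For `D` squarefree and `X ⊆ ℝ`, the map
`(u,v) ↦ (u/v, √(F(u,v)/D)/v²)` is a bijection from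
`Σ_{D,X} = {(u,v) ∈ Ψ : u/v ∈ X, v > 0, s(F(u,v)) = D}` onto
`{(x,y) ∈ ℚ² : Dy² = f(x), y > 0, x ∈ X}`; the image of `(u,v)` is the unique
point with first coordinate `u/v`. -/
theorem sigma_bijection (a b c : ℤ) (hf : DistinctRoots a b c)
    (sq : ℤ → ℤ) (hsq : IsSqfreePart sq) (D : ℤ) (hD : Squarefree D) (X : Set ℝ) :
    ∃ φ : {p : ℤ × ℤ // p ∈ Psi a b c ∧ ((p.1 : ℝ) / (p.2 : ℝ)) ∈ X ∧ 0 < p.2 ∧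
            sq (Fbin a b c p.1 p.2) = D} →
          {q : ℚ × ℚ // (D : ℚ) * q.2^2 = q.1^3 + a*q.1^2 + b*q.1 + c ∧ 0 < q.2 ∧
            ((q.1 : ℝ)) ∈ X},
      Function.Bijective φ ∧
        ∀ p, ((φ p : ℚ × ℚ)).1 = ((p : ℤ × ℤ).1 : ℚ) / ((p : ℤ × ℤ).2 : ℚ) := by
  have hD0 : (D : ℚ) ≠ 0 := by exact_mod_cast hD.ne_zero
  have key : ∀ p : {p : ℤ × ℤ // p ∈ Psi a b c ∧ ((p.1 : ℝ) / (p.2 : ℝ)) ∈ X ∧ 0 < p.2 ∧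
            sq (Fbin a b c p.1 p.2) = D},
      ∃ y : ℚ, (D : ℚ) * y^2 = ((p.1.1 : ℚ) / p.1.2)^3 + a*((p.1.1 : ℚ) / p.1.2)^2
        + b*((p.1.1 : ℚ) / p.1.2) + c ∧ 0 < y := by
    rintro ⟨⟨u, v⟩, ⟨hg, hF⟩, hX, hv, hs⟩
    dsimp only at *
    obtain ⟨-, m, hm⟩ := hsq _ hF
    rw [hs] at hm
    have hv0 : (v : ℚ) ≠ 0 := by exact_mod_cast hv.ne'
    have hFq : (Fbin a b c u v : ℚ) ≠ 0 := by exact_mod_cast hF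
    have hm0 : m ≠ 0 := by
      rintro rfl
      apply hFq
      rw [hm]; ring
    refine ⟨|m / (v : ℚ)^2|, ?_, by positivity⟩
    rw [sq_abs]
    rw [Fbin_eq a b c u v hv.ne'] at hm
    rw [div_pow, ← mul_div_assoc, ← hm]
    field_simp
  choose y hy hy0 using key
  refine ⟨fun p => ⟨((p.1.1 : ℚ) / p.1.2, y p), hy p, hy0 p, ?_⟩, ⟨?_, ?_⟩, fun p => rfl⟩
  · have := p.2.2.1
    push_cast
    exact this
  · rintro ⟨⟨u, v⟩, ⟨hg, hF⟩, hX, hv, hs⟩ ⟨⟨u', v'⟩, ⟨hg', hF'⟩, hX', hv', hs'⟩ h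
    have h1 := congrArg (fun q => q.1.1) h
    dsimp only at *
    obtain ⟨h2, h3⟩ := Rat.div_int_inj hv hv' hg hg' h1
    subst h2 h3
    rfl
  · rintro ⟨⟨x, z⟩, hxz, hz, hX⟩
    dsimp only at *
    have hden : (0 : ℤ) < x.den := by exact_mod_cast x.pos
    have hx : ((x.num : ℤ) : ℚ) / ((x.den : ℤ) : ℚ) = x := by
      simpa using Rat.num_div_den x
    have hFx := Fbin_eq a b c x.num x.den hden.ne'
    rw [hx, ← hxz] at hFx
    have hdq : ((x.den : ℤ) : ℚ) ≠ 0 := by exact_mod_cast hden.ne'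
    have hF : Fbin a b c x.num x.den ≠ 0 := by
      intro h0
      rw [h0] at hFx
      have : (D : ℚ) * z ^ 2 * (((x.den : ℤ) : ℚ)^2)^2 ≠ 0 := by positivity
      exact this (by rw [← hFx]; simp)
    obtain ⟨hsf, m, hm⟩ := hsq _ hF
    have hs : sq (Fbin a b c x.num x.den) = D := by
      have hw : z * ((x.den : ℤ) : ℚ)^2 ≠ 0 := by positivity
      refine (sqf_unique _ _ hD hsf (m / (z * ((x.den : ℤ) : ℚ)^2)) ?_).symm
      rw [div_pow, ← mul_div_assoc, ← hm, hFx]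
      field_simp
    refine ⟨⟨(x.num, x.den), ⟨?_, hF⟩, ?_, hden, hs⟩, ?_⟩
    · have := x.reduced
      simpa [Int.gcd, Nat.Coprime] using this
    · have : ((x.num : ℝ) / ((x.den : ℤ) : ℝ)) = (x : ℝ) := by
        rw [← congrArg (fun t : ℚ => (t : ℝ)) hx]
        push_cast
        rfl
      dsimp only
      rw [this]
      exact hX
    · apply Subtype.ext
      refine Prod.ext hx ?_
      dsimp only
      generalize_proofs pf
      have h1 := hy ⟨(x.num, (x.den : ℤ)), pf⟩
      have h2 := hy0 ⟨(x.num, (x.den : ℤ)), pf⟩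
      dsimp only at h1
      rw [hx, ← hxz] at h1
      have h3 := mul_left_cancel₀ hD0 h1
      exact (pow_left_inj₀ h2.le hz.le (by norm_num)).1 h3
end

section
/- There exists a constant C (depending only on a, b, c) such that for every positive integer d, the number of α ∈ ℤ/d²ℤ with f(α) ≡ 0 (mod d²) is at most C·3^{ν(d)}, where ν(d) is the number of distinct prime divisors of d. -/
/-- the cubic as an integer function -/
def fI (a b c x : ℤ) : ℤ := x^3 + a*x^2 + b*x + c

/-- the discriminant -/
def dI (a b c : ℤ) : ℤ := a^2*b^2 - 4*b^3 - 4*a^3*c - 27*c^2 + 18*a*b*c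

lemma dI_eq (a b c x : ℤ) : dI a b c =
    fI a b c x * (3*(6*b-2*a^2)*x + 2*a*(6*b-2*a^2) - 3*(9*c-a*b)) -
    (3*x^2+2*a*x+b) * ((6*b-2*a^2)*x^2 + (a*(6*b-2*a^2)-(9*c-a*b))*x + (4*b^2-a^2*b-3*a*c)) := by
  unfold dI fI; ring

lemma dI_ne (a b c : ℤ) (hf : DistinctRoots a b c) : dI a b c ≠ 0 := by
  obtain ⟨r, s, t, h1, h2, h3, h⟩ := hf
  have e0 := h 0
  have e1 := h 1
  have e2 := h (-1)
  have hc : (c : ℂ) = -(r*s*t) := by linear_combination e0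
  have ha : (a : ℂ) = -(r+s+t) := by linear_combination (1/2)*e1 + (1/2)*e2 - e0
  have hb : (b : ℂ) = r*s+r*t+s*t := by linear_combination (1/2)*e1 - (1/2)*e2
  intro h0
  have h4 : ((dI a b c : ℤ) : ℂ) = ((r-s)*(r-t)*(s-t))^2 := by
    unfold dI; push_cast; rw [ha, hb, hc]; ring
  rw [h0] at h4
  have : ((r-s)*(r-t)*(s-t)) ≠ 0 :=
    mul_ne_zero (mul_ne_zero (sub_ne_zero.2 h1) (sub_ne_zero.2 h2)) (sub_ne_zero.2 h3)
  exact pow_ne_zero 2 this (by rw [← h4]; simp)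

lemma key (a b c : ℤ) (p e m : ℕ) (hp : p.Prime) (hD : ¬ (p:ℤ)^(e+1) ∣ dI a b c) (hm : e < m)
    (x y : ℤ) (hx : (p:ℤ)^m ∣ fI a b c x) (hy : (p:ℤ)^m ∣ fI a b c y)
    (hxy : (p:ℤ)^(e+1) ∣ y - x) : (p:ℤ)^(m-e) ∣ y - x := by
  have hpi : Prime (p:ℤ) := Nat.prime_iff_prime_int.1 hp
  set g : ℤ := (3*x^2+2*a*x+b) + (y-x)*(3*x+a+(y-x)) with hg
  have hgd : ¬ (p:ℤ)^(e+1) ∣ g := by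
    intro hh
    have h1 : (p:ℤ)^(e+1) ∣ 3*x^2+2*a*x+b := by
      have := dvd_sub hh (hxy.mul_right (3*x+a+(y-x)))
      simpa [hg] using this
    have h2 : (p:ℤ)^(e+1) ∣ fI a b c x := (pow_dvd_pow _ hm).trans hx
    apply hD
    rw [dI_eq a b c x]
    exact dvd_sub (h2.mul_right _) (h1.mul_right _)
  have hg0 : g ≠ 0 := fun h => hgd (h ▸ dvd_zero _)
  have hfin : FiniteMultiplicity (p:ℤ) g := FiniteMultiplicity.of_prime_left hpi hg0
  obtain ⟨g', hg', hnd⟩ := hfin.exists_eq_pow_mul_and_not_dvd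
  set j := multiplicity (p:ℤ) g
  have hj : j ≤ e := by
    by_contra hc
    exact hgd ((pow_dvd_pow _ (by omega)).trans (Dvd.intro _ hg'.symm))
  have h3 : (p:ℤ)^m ∣ (y-x) * g := by
    have : (y-x)*g = fI a b c y - fI a b c x := by rw [hg]; unfold fI; ring
    rw [this]; exact dvd_sub hy hx
  rw [hg', ← mul_assoc] at h3
  have h4 := hpi.pow_dvd_of_dvd_mul_right _ hnd h3
  have h5 : (p:ℤ)^m = (p:ℤ)^(m-j) * (p:ℤ)^j := by rw [← pow_add]; congr 1; omega
  rw [h5] at h4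
  have h6 := (mul_dvd_mul_iff_right (pow_ne_zero j hpi.ne_zero)).1 h4
  exact (pow_dvd_pow _ (by omega)).trans h6

/-- roots mod n -/
def rts (a b c : ℤ) (n : ℕ) : Finset ℕ := (Finset.range n).filter (fun x => (n:ℤ) ∣ fI a b c x)

lemma fI_mod (a b c : ℤ) (n k x : ℕ) (hk : n ∣ k) (h : (k:ℤ) ∣ fI a b c x) :
    (n:ℤ) ∣ fI a b c ((x % n : ℕ) : ℤ) := by
  have h1 : (n:ℤ) ∣ fI a b c x := (Int.natCast_dvd_natCast.2 hk).trans h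
  rw [← ZMod.intCast_zmod_eq_zero_iff_dvd] at h1 ⊢
  unfold fI at *
  push_cast at *
  simpa [ZMod.natCast_mod] using h1

lemma mod_mem (a b c : ℤ) (n k x : ℕ) (hn : 0 < n) (hk : n ∣ k) (h : x ∈ rts a b c k) :
    x % n ∈ rts a b c n := by
  simp only [rts, Finset.mem_filter, Finset.mem_range] at *
  exact ⟨Nat.mod_lt _ hn, fI_mod a b c n k x hk h.2⟩

lemma rts_prime (a b c : ℤ) (p : ℕ) (hp : p.Prime) : (rts a b c p).card ≤ 3 := by
  haveI := Fact.mk hp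
  let P : Polynomial (ZMod p) := Polynomial.X^3 + Polynomial.C (a : ZMod p) * Polynomial.X^2
    + Polynomial.C (b : ZMod p) * Polynomial.X + Polynomial.C (c : ZMod p)
  have hdeg : P.natDegree = 3 := by simp only [P]; compute_degree!
  have hP : P ≠ 0 := by intro h; rw [h] at hdeg; simp at hdeg
  have h1 : (rts a b c p).card ≤ P.roots.toFinset.card := by
    apply Finset.card_le_card_of_injOn (fun x : ℕ => (x : ZMod p))
    · intro x hx
      simp only [rts, Finset.coe_filter, Finset.mem_range, Set.mem_setOf_eq] at hx
      have h2 := (ZMod.intCast_zmod_eq_zero_iff_dvd _ p).2 hx.2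
      unfold fI at h2
      push_cast at h2
      simp only [Finset.mem_coe, Multiset.mem_toFinset, Polynomial.mem_roots hP,
        Polynomial.IsRoot.def]
      simpa [P] using h2
    · intro x hx y hy hxy
      simp only [rts, Finset.coe_filter, Finset.mem_range, Set.mem_setOf_eq] at hx hy
      have := (ZMod.natCast_eq_natCast_iff' _ _ _).1 hxy
      rwa [Nat.mod_eq_of_lt hx.1, Nat.mod_eq_of_lt hy.1] at this
  calc _ ≤ _ := h1
    _ ≤ P.roots.card := Multiset.toFinset_card_le _
    _ ≤ P.natDegree := Polynomial.card_roots' _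
    _ = 3 := hdeg

lemma rts_card_le (a b c : ℤ) (n : ℕ) : (rts a b c n).card ≤ n := by
  simpa [rts] using Finset.card_filter_le (Finset.range n) (fun x => (n:ℤ) ∣ fI a b c x)

lemma key_nat (a b c : ℤ) (p e m : ℕ) (hp : p.Prime) (hD : ¬ (p:ℤ)^(e+1) ∣ dI a b c) (hm : e < m)
    (x y : ℕ) (hx : x ∈ rts a b c (p^m)) (hy : y ∈ rts a b c (p^m))
    (hxy : x % p^(e+1) = y % p^(e+1)) : x % p^(m-e) = y % p^(m-e) := by
  simp only [rts, Finset.mem_filter, Finset.mem_range] at hx hy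
  have h := key a b c p e m hp hD hm x y (by exact_mod_cast hx.2) (by exact_mod_cast hy.2)
    (by exact_mod_cast (Nat.modEq_iff_dvd (n := p^(e+1))).1 hxy)
  exact (Nat.modEq_iff_dvd (n := p^(m-e))).2 (by exact_mod_cast h)

lemma rts_pp (a b c : ℤ) (p e m : ℕ) (hp : p.Prime) (hD : ¬ (p:ℤ)^(e+1) ∣ dI a b c) (hm : 0 < m) :
    (rts a b c (p^m)).card ≤ 3 * p^(3*e) := by
  have hp0 := hp.pos
  rcases le_or_gt m e with h | h
  · calc _ ≤ p^m := rts_card_le _ _ _ _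
      _ ≤ p^(3*e) := Nat.pow_le_pow_right hp0 (by omega)
      _ ≤ _ := by omega
  rcases Nat.eq_zero_or_pos e with rfl | he
  · simp only [mul_zero, pow_zero, mul_one]
    refine le_trans ?_ (rts_prime a b c p hp)
    apply Finset.card_le_card_of_injOn (fun x => x % p)
    · intro x hx
      exact mod_mem a b c p (p^m) x hp0 (dvd_pow_self p hm.ne') hx
    · intro x hx y hy hxy
      have := key_nat a b c p 0 m hp hD h x y hx hy (by simpa using hxy)
      simp only [rts, Finset.coe_filter, Finset.mem_range, Set.mem_setOf_eq] at hx hy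
      simpa [Nat.mod_eq_of_lt hx.1, Nat.mod_eq_of_lt hy.1] using this
  · have : (rts a b c (p^m)).card ≤
        (Finset.range (p^(e+1)) ×ˢ Finset.range (p^e)).card := by
      apply Finset.card_le_card_of_injOn (fun x => (x % p^(e+1), x / p^(m-e)))
      · intro x hx
        simp only [rts, Finset.coe_filter, Finset.mem_range, Set.mem_setOf_eq] at hx
        simp only [Finset.coe_product, Set.mem_prod, Finset.mem_coe, Finset.mem_range]
        refine ⟨Nat.mod_lt _ (pow_pos hp0 _), ?_⟩
        rw [Nat.div_lt_iff_lt_mul (pow_pos hp0 _), ← pow_add]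
        have : e + (m - e) = m := by omega
        rw [this]; exact hx.1
      · intro x hx y hy hxy
        simp only [Prod.mk.injEq] at hxy
        have := key_nat a b c p e m hp hD h x y hx hy hxy.1
        rw [← Nat.div_add_mod x (p^(m-e)), ← Nat.div_add_mod y (p^(m-e)), this, hxy.2]
    rw [Finset.card_product, Finset.card_range, Finset.card_range, ← pow_add] at this
    calc _ ≤ _ := this
      _ ≤ p^(3*e) := Nat.pow_le_pow_right hp0 (by omega)
      _ ≤ _ := by omega

lemma rts_mul (a b c : ℤ) (m n : ℕ) (hm : 0 < m) (hn : 0 < n) (h : m.Coprime n) :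
    (rts a b c (m*n)).card ≤ (rts a b c m).card * (rts a b c n).card := by
  rw [← Finset.card_product]
  apply Finset.card_le_card_of_injOn (fun x => (x % m, x % n))
  · intro x hx
    simp only [Finset.coe_product, Set.mem_prod, Finset.mem_coe]
    exact ⟨mod_mem a b c m _ x hm (Dvd.intro _ rfl) hx, mod_mem a b c n _ x hn (Dvd.intro_left _ rfl) hx⟩
  · intro x hx y hy hxy
    simp only [Prod.mk.injEq] at hxy
    have h1 : x ≡ y [MOD m*n] := (Nat.modEq_and_modEq_iff_modEq_mul h).1 ⟨hxy.1, hxy.2⟩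
    simp only [rts, Finset.coe_filter, Finset.mem_range, Set.mem_setOf_eq] at hx hy
    exact Nat.ModEq.eq_of_lt_of_lt h1 hx.1 hy.1

lemma rts_bound (a b c : ℤ) (hD : dI a b c ≠ 0) (n : ℕ) (hn : 0 < n) :
    (rts a b c n).card ≤ ∏ p ∈ n.primeFactors, 3 * p^(3*(dI a b c).natAbs.factorization p) := by
  induction n using Nat.recOnPosPrimePosCoprime with
  | zero => omega
  | one => simpa using rts_card_le a b c 1
  | prime_pow p k hp hk =>
    rw [Nat.primeFactors_prime_pow hk.ne' hp, Finset.prod_singleton]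
    apply rts_pp a b c p _ k hp _ hk
    intro h
    have h1 : p^((dI a b c).natAbs.factorization p + 1) ∣ (dI a b c).natAbs := by
      rw [← Int.natCast_dvd]; exact_mod_cast h
    exact Nat.pow_succ_factorization_not_dvd (Int.natAbs_ne_zero.2 hD) hp h1
  | coprime m n hm hn' hmn ihm ihn =>
    rw [hmn.primeFactors_mul, Finset.prod_union hmn.disjoint_primeFactors]
    exact (rts_mul a b c m n (by omega) (by omega) hmn).trans
      (Nat.mul_le_mul (ihm (by omega)) (ihn (by omega)))

lemma prod_le (D n : ℕ) (hD : D ≠ 0) : ∏ p ∈ n.primeFactors, p^(D.factorization p) ≤ D := by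
  apply Nat.le_of_dvd (Nat.pos_of_ne_zero hD)
  apply Finset.prod_dvd_of_isRelPrime
  · intro p hp q hq hpq
    refine Nat.coprime_iff_isRelPrime.1 ?_
    exact Nat.coprime_pow_primes _ _ (Nat.prime_of_mem_primeFactors hp)
      (Nat.prime_of_mem_primeFactors hq) hpq
  · intro p _
    exact Nat.ordProj_dvd D p

/-- There is a constant `C` (depending only on `a, b, c`) such that
`#Ω_d ≤ C·3^{ν(d)}` for all `d ≥ 1`, where `ν(d)` is the number of distinct
prime divisors of `d`. -/
theorem card_omega_le (a b c : ℤ) (hf : DistinctRoots a b c) :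
    ∃ C : ℕ, ∀ d : ℕ, 0 < d →
      (OmegaSet a b c d).Finite ∧
        (OmegaSet a b c d).ncard ≤ C * 3 ^ d.primeFactors.card := by
  have hD := dI_ne a b c hf
  refine ⟨(dI a b c).natAbs ^ 3, fun d hd => ?_⟩
  haveI : NeZero (d^2) := ⟨(pow_pos hd 2).ne'⟩
  refine ⟨Set.toFinite _, ?_⟩
  have h1 : (OmegaSet a b c d).ncard ≤ (rts a b c (d^2)).card := by
    rw [← Set.ncard_coe_finset]
    apply Set.ncard_le_ncard_of_injOn (fun x => x.val)
    · intro x hx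
      simp only [rts, Finset.coe_filter, Finset.mem_range, Set.mem_setOf_eq]
      refine ⟨ZMod.val_lt x, ?_⟩
      rw [← ZMod.intCast_zmod_eq_zero_iff_dvd]
      unfold fI
      simp only [OmegaSet, Set.mem_setOf_eq] at hx
      simpa using hx
    · exact (ZMod.val_injective _).injOn
  have h2 := rts_bound a b c hD (d^2) (pow_pos hd 2)
  rw [Nat.primeFactors_pow d two_ne_zero, Finset.prod_mul_distrib, Finset.prod_const] at h2
  simp only [mul_comm 3 ((dI a b c).natAbs.factorization _), pow_mul] at h2
  rw [Finset.prod_pow] at h2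
  refine h1.trans (h2.trans ?_)
  rw [mul_comm]
  exact Nat.mul_le_mul_right _ (Nat.pow_le_pow_left (prod_le _ d (Int.natAbs_ne_zero.2 hD)) 3)
end

section
/- There exists a constant C (depending only on a, b, c) such that for every positive integer t, the number of triples (α, d, d') with d, d' positive integers, gcd(d,d') = 1, dd' = t, and α ∈ Ω_d, is at most C·4^{ν(t)}, where ν(t) is the number of distinct prime divisors of t. -/
/-- nine times the (negated) discriminant -/
def DD (a b c : ℤ) : ℤ :=
  (6*b-2*a^2)^2*b - 2*a*(6*b-2*a^2)*(9*c-a*b) + 3*(9*c-a*b)^2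

theorem DD_ne_zero (a b c : ℤ) (hf : DistinctRoots a b c) : DD a b c ≠ 0 := by
  obtain ⟨r, s, t, h1, h2, h3, h⟩ := hf
  have e0 := h 0
  have e1 := h 1
  have e2 := h (-1)
  have hc : (c : ℂ) = -(r*s*t) := by linear_combination e0
  have ha : (a : ℂ) = -(r+s+t) := by linear_combination (e1+e2)/2 - e0
  have hb : (b : ℂ) = r*s+r*t+s*t := by linear_combination (e1-e2)/2
  intro h0
  have h0' : ((DD a b c : ℤ) : ℂ) = 0 := by rw [h0]; simp
  have : ((DD a b c : ℤ) : ℂ) = -9*((r-s)*(r-t)*(s-t))^2 := by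
    unfold DD
    push_cast
    rw [ha, hb, hc]
    ring
  rw [this] at h0'
  have := sub_ne_zero.2 h1
  have := sub_ne_zero.2 h2
  have := sub_ne_zero.2 h3
  simp_all

theorem pow_dvd_aux (p : ℤ) (hp : Prime p) (x : ℤ) (k e : ℕ) : ∀ G : ℤ,
    p^(k+e) ∣ x*G → ¬ p^(e+1) ∣ G → p^k ∣ x := by
  induction e with
  | zero =>
    intro G h1 h2
    rw [zero_add, pow_one] at h2
    have hcop : IsCoprime p G := (hp.coprime_iff_not_dvd).2 h2
    exact (hcop.pow_left).dvd_of_dvd_mul_right (by simpa using h1)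
  | succ e ih =>
    intro G h1 h2
    by_cases hG : p ∣ G
    · obtain ⟨G', rfl⟩ := hG
      apply ih G'
      · have : p * p^(k+e) ∣ p * (x*G') := by
          convert! h1 using 1 <;> ring
        exact (mul_dvd_mul_iff_left hp.ne_zero).1 this
      · intro h
        apply h2
        rw [pow_succ' p (e+1)]
        exact mul_dvd_mul_left p h
    · have hcop : IsCoprime p G := (hp.coprime_iff_not_dvd).2 hG
      have := (hcop.pow_left (m := k+(e+1))).dvd_of_dvd_mul_right h1
      exact (pow_dvd_pow p (by omega)).trans this

def fz (a b c x : ℤ) : ℤ := x^3+a*x^2+b*x+c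

theorem close_roots (a b c p : ℤ) (hp : Prime p) (k e : ℕ) (x y : ℤ)
    (hD : ¬ p^(e+1) ∣ DD a b c)
    (hx : p^(k+1+e) ∣ fz a b c x) (hy : p^(k+1+e) ∣ fz a b c y) (hxy : p^(e+1) ∣ x - y) :
    p^(k+1) ∣ x - y := by
  apply pow_dvd_aux p hp (x-y) (k+1) e (x^2+x*y+y^2+a*(x+y)+b)
  · have := dvd_sub hx hy
    convert! this using 1
    unfold fz; ring
  · intro hG
    apply hD
    have h1 : p^(e+1) ∣ 3*x^2+2*a*x+b := by
      have := dvd_add hG (hxy.mul_right (2*x+y+a))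
      convert! this using 1
      ring
    have h2 : p^(e+1) ∣ fz a b c x := (pow_dvd_pow p (by omega)).trans hx
    have := dvd_add (h1.mul_right ((6*b-2*a^2)^2 + (3*x+a)*(3*(6*b-2*a^2)*x+2*a*(6*b-2*a^2)-3*(9*c-a*b))))
      (h2.mul_right (-9*(3*(6*b-2*a^2)*x+2*a*(6*b-2*a^2)-3*(9*c-a*b))))
    convert! this using 1
    unfold DD fz; ring

open Classical in
def RR (a b c : ℤ) (n : ℕ) : Finset ℕ :=
  (Finset.range n).filter (fun x : ℕ => (n : ℤ) ∣ fz a b c x)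

theorem mem_RR (a b c : ℤ) (n x : ℕ) : x ∈ RR a b c n ↔ x < n ∧ (n : ℤ) ∣ fz a b c x := by
  classical
  simp [RR]

theorem fz_congr (a b c : ℤ) (n x y : ℤ) (h : n ∣ x - y) (hx : n ∣ fz a b c x) :
    n ∣ fz a b c y := by
  have := dvd_sub hx (h.mul_right (x^2+x*y+y^2+a*(x+y)+b))
  convert! this using 1
  unfold fz; ring

theorem RR_mod (a b c : ℤ) (m n x : ℕ) (hm : 0 < m) (h : m ∣ n) (hx : x ∈ RR a b c n) :
    x % m ∈ RR a b c m := by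
  rw [mem_RR] at *
  refine ⟨Nat.mod_lt _ hm, ?_⟩
  refine fz_congr a b c m x _ ?_ ((Int.natCast_dvd_natCast.2 h).trans hx.2)
  push_cast
  exact Int.dvd_self_sub_emod

theorem RR_mul (a b c : ℤ) (m n : ℕ) (hm : 0 < m) (hn : 0 < n) (h : Nat.Coprime m n) :
    (RR a b c (m*n)).card ≤ (RR a b c m).card * (RR a b c n).card := by
  rw [← Finset.card_product]
  apply Finset.card_le_card_of_injOn (fun x => (x % m, x % n))
  · intro x hx
    simp only [Finset.mem_coe, Finset.mem_product] at *
    exact ⟨RR_mod a b c m _ x hm (dvd_mul_right _ _) hx, RR_mod a b c n _ x hn (dvd_mul_left _ _) hx⟩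
  · intro x hx y hy hxy
    simp only [Finset.mem_coe, mem_RR, Prod.mk.injEq] at *
    have : x ≡ y [MOD m*n] := (Nat.modEq_and_modEq_iff_modEq_mul h).1 hxy
    exact this.eq_of_lt_of_lt hx.1 hy.1

theorem RR_prime (a b c : ℤ) (p : ℕ) (hp : p.Prime) : (RR a b c p).card ≤ 3 := by
  classical
  have := Fact.mk hp
  open Polynomial in
  let P : (ZMod p)[X] := X^3 + C (a : ZMod p) * X^2 + C (b : ZMod p) * X + C (c : ZMod p)
  have hdeg : P.natDegree = 3 := by
    simp only [P]; compute_degree!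
  have hP : P ≠ 0 := by
    intro h; rw [h] at hdeg; simp at hdeg
  have : (RR a b c p).card ≤ P.roots.toFinset.card := by
    apply Finset.card_le_card_of_injOn (fun x : ℕ => (x : ZMod p))
    · intro x hx
      rw [Finset.mem_coe, mem_RR] at hx
      rw [Finset.mem_coe, Multiset.mem_toFinset, Polynomial.mem_roots hP]
      have := (ZMod.intCast_zmod_eq_zero_iff_dvd _ p).2 hx.2
      simpa [fz, P] using this
    · intro x hx y hy hxy
      simp only [Finset.mem_coe, mem_RR] at *
      have : x ≡ y [MOD p] := (ZMod.natCast_eq_natCast_iff _ _ _).1 hxy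
      exact this.eq_of_lt_of_lt hx.1 hy.1
  calc _ ≤ _ := this
    _ ≤ _ := Multiset.toFinset_card_le _
    _ ≤ _ := Polynomial.card_roots' _
    _ = 3 := hdeg

theorem RR_card_le (a b c : ℤ) (n : ℕ) : (RR a b c n).card ≤ n := by
  classical
  unfold RR
  exact (Finset.card_filter_le _ _).trans (by simp)

theorem RR_prime_pow (a b c : ℤ) (hf : DD a b c ≠ 0) (p k : ℕ) (hp : p.Prime) (hk : 0 < k) :
    (RR a b c (p^k)).card ≤ 3 * p^(3 * (DD a b c).natAbs.factorization p) := by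
  have hpos := hp.pos
  have hD : ¬ (p:ℤ)^((DD a b c).natAbs.factorization p + 1) ∣ DD a b c := by
    rw [← Nat.cast_pow, Int.natCast_dvd]
    exact Nat.pow_succ_factorization_not_dvd (by simpa using hf) hp
  have hpZ : Prime (p:ℤ) := Nat.prime_iff_prime_int.1 hp
  generalize (DD a b c).natAbs.factorization p = e at *
  by_cases hke : k ≤ e
  · calc _ ≤ p^k := RR_card_le _ _ _ _
      _ ≤ p^(3*e) := Nat.pow_le_pow_right hpos (by omega)
      _ ≤ _ := by omega
  obtain ⟨j, rfl⟩ : ∃ j, k = j+1+e := ⟨k-e-1, by omega⟩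
  have key : ∀ x ∈ RR a b c (p^(j+1+e)), ∀ y ∈ RR a b c (p^(j+1+e)),
      x ≡ y [MOD p^(e+1)] → x ≡ y [MOD p^(j+1)] := by
    intro x hx y hy h
    rw [mem_RR] at hx hy
    rw [Nat.modEq_iff_dvd] at *
    push_cast at *
    exact close_roots a b c p hpZ j e y x hD hy.2 hx.2 h
  rcases Nat.eq_zero_or_pos e with rfl | he
  · refine le_trans ?_ ((RR_prime a b c p hp).trans (by simp))
    apply Finset.card_le_card_of_injOn (fun x => x % p)
    · intro x hx
      exact RR_mod a b c p _ x hpos (dvd_pow_self p (by omega)) hx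
    · intro x hx y hy hxy
      have h := key x hx y hy (by simpa [Nat.ModEq] using hxy)
      simp only [Finset.mem_coe, mem_RR] at hx hy
      exact h.eq_of_lt_of_lt hx.1 hy.1
  · have : (RR a b c (p^(j+1+e))).card ≤ (Finset.range (p^(e+1)) ×ˢ Finset.range (p^e)).card := by
      apply Finset.card_le_card_of_injOn (fun x => (x % p^(e+1), x / p^(j+1)))
      · intro x hx
        simp only [Finset.mem_coe, mem_RR, Finset.mem_product, Finset.mem_range] at *
        refine ⟨Nat.mod_lt _ (by positivity), ?_⟩
        rw [Nat.div_lt_iff_lt_mul (by positivity), ← pow_add, add_comm e]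
        exact hx.1
      · intro x hx y hy hxy
        simp only [Prod.mk.injEq] at hxy
        have h := key x hx y hy hxy.1
        rw [← Nat.div_add_mod x (p^(j+1)), ← Nat.div_add_mod y (p^(j+1)), hxy.2, h]
    rw [Finset.card_product, Finset.card_range, Finset.card_range, ← pow_add] at this
    calc _ ≤ _ := this
      _ ≤ p^(3*e) := Nat.pow_le_pow_right hpos (by omega)
      _ ≤ _ := by omega

theorem RR_le_prod (a b c : ℤ) (hf : DD a b c ≠ 0) (n : ℕ) : 0 < n →
    (RR a b c n).card ≤ ∏ p ∈ n.primeFactors, (3 * p^(3 * (DD a b c).natAbs.factorization p)) := by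
  induction n using Nat.recOnPosPrimePosCoprime with
  | zero => simp
  | one => intro _; simpa using RR_card_le a b c 1
  | prime_pow p k hp hk =>
    intro _
    rw [Nat.primeFactors_prime_pow hk.ne' hp, Finset.prod_singleton]
    exact RR_prime_pow a b c hf p k hp hk
  | coprime m n hm hn hmn ihm ihn =>
    intro _
    rw [hmn.primeFactors_mul, Finset.prod_union hmn.disjoint_primeFactors]
    exact (RR_mul a b c m n (by omega) (by omega) hmn).trans
      (Nat.mul_le_mul (ihm (by omega)) (ihn (by omega)))

theorem RR_le (a b c : ℤ) (hf : DD a b c ≠ 0) (n : ℕ) (hn : 0 < n) :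
    (RR a b c n).card ≤ (DD a b c).natAbs^3 * 3^n.primeFactors.card := by
  refine (RR_le_prod a b c hf n hn).trans ?_
  rw [Finset.prod_mul_distrib, Finset.prod_const, mul_comm]
  apply Nat.mul_le_mul_right
  have hD : (DD a b c).natAbs ≠ 0 := by simpa using hf
  generalize (DD a b c).natAbs = D at *
  simp_rw [mul_comm 3, pow_mul]
  rw [Finset.prod_pow]
  apply Nat.pow_le_pow_left
  have h1 : ∏ p ∈ n.primeFactors, p^(D.factorization p)
      ≤ ∏ p ∈ n.primeFactors ∪ D.primeFactors, p^(D.factorization p) := by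
    apply Finset.prod_le_prod_of_subset_of_one_le' Finset.subset_union_left
    intro p hp _
    have : 0 < p := by
      rcases Finset.mem_union.1 hp with h | h <;> exact (Nat.prime_of_mem_primeFactors h).pos
    exact Nat.one_le_pow _ _ this
  refine h1.trans ?_
  rw [← Finset.prod_subset (Finset.subset_union_right (s₁ := n.primeFactors))]
  · exact (Nat.prod_factorization_pow_eq_self hD).le
  · intro p _ hp
    rw [← Nat.support_factorization, Finsupp.notMem_support_iff] at hp
    simp [hp]

/-- pairs (d, x) -/
def TT (a b c : ℤ) (t : ℕ) : Finset (Σ _ : ℕ, ℕ) :=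
  (t.divisors.filter (fun d => Nat.Coprime d (t/d))).sigma (fun d => RR a b c (d^2))

theorem TT_card (a b c : ℤ) (hf : DD a b c ≠ 0) (t : ℕ) (ht : 0 < t) :
    (TT a b c t).card ≤ (DD a b c).natAbs^3 * 4^t.primeFactors.card := by
  rw [TT, Finset.card_sigma]
  have hpos : ∀ d ∈ t.divisors.filter (fun d => Nat.Coprime d (t/d)), 0 < d := by
    intro d hd
    exact Nat.pos_of_mem_divisors (Finset.mem_filter.1 hd).1
  have h1 : ∀ d ∈ t.divisors.filter (fun d => Nat.Coprime d (t/d)),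
      (RR a b c (d^2)).card ≤ (DD a b c).natAbs^3 * 3^d.primeFactors.card := by
    intro d hd
    have := RR_le a b c hf (d^2) (pow_pos (hpos d hd) 2)
    rwa [Nat.primeFactors_pow _ two_ne_zero] at this
  refine (Finset.sum_le_sum h1).trans ?_
  rw [← Finset.mul_sum]
  apply Nat.mul_le_mul_left
  have hdvd : ∀ d ∈ t.divisors.filter (fun d => Nat.Coprime d (t/d)),
      ∀ d' ∈ t.divisors.filter (fun d => Nat.Coprime d (t/d)),
      d.primeFactors = d'.primeFactors → d ∣ d' := by
    intro d hd d' hd' h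
    have h0 := hpos d hd
    have h0' := hpos d' hd'
    simp only [Finset.mem_filter, Nat.mem_divisors] at hd hd'
    have ht' : d' * (t/d') = t := Nat.mul_div_cancel' hd'.1.1
    have hne : t/d' ≠ 0 := by
      intro h; rw [h] at ht'; omega
    have hc : Nat.Coprime d (t/d') := by
      rw [← Nat.disjoint_primeFactors h0.ne' hne, h, Nat.disjoint_primeFactors h0'.ne' hne]
      exact hd'.2
    apply hc.dvd_of_dvd_mul_right
    rw [ht']
    exact hd.1.1
  have hinj : Set.InjOn Nat.primeFactors
      (t.divisors.filter (fun d => Nat.Coprime d (t/d)) : Set ℕ) := by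
    intro d hd d' hd' h
    exact Nat.dvd_antisymm (hdvd d hd d' hd' h) (hdvd d' hd' d hd h.symm)
  rw [← Finset.sum_image (f := fun s : Finset ℕ => 3^s.card) hinj]
  calc _ ≤ ∑ s ∈ t.primeFactors.powerset, 3^s.card := by
        apply Finset.sum_le_sum_of_subset
        intro s hs
        obtain ⟨d, hd, rfl⟩ := Finset.mem_image.1 hs
        rw [Finset.mem_powerset]
        exact Nat.primeFactors_mono (Nat.dvd_of_mem_divisors (Finset.mem_filter.1 hd).1) ht.ne'
    _ = 4^t.primeFactors.card := by
        have := Finset.sum_pow_mul_eq_add_pow (3:ℕ) 1 t.primeFactors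
        simpa using this

/-- There is a constant `C` (depending only on `a, b, c`) such that for every
`t ≥ 1` the number of triples `(α, d, d')` with `d, d'` coprime positive integers,
`dd' = t`, and `α ∈ Ω_d` is at most `C·4^{ν(t)}`. -/
theorem card_triples_le (a b c : ℤ) (hf : DistinctRoots a b c) :
    ∃ C : ℕ, ∀ t : ℕ, 0 < t →
      (TripSet a b c t).Finite ∧
        (TripSet a b c t).ncard ≤ C * 4 ^ t.primeFactors.card := by
  have hD := DD_ne_zero a b c hf
  refine ⟨(DD a b c).natAbs^3, fun t ht => ?_⟩
  let φ : (Σ d : ℕ, ℕ × ZMod (d^2)) → (Σ _ : ℕ, ℕ) := fun x => ⟨x.1, x.2.2.val⟩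
  have hmaps : Set.MapsTo φ (TripSet a b c t) (TT a b c t : Set (Σ _ : ℕ, ℕ)) := by
    rintro ⟨d, d', α⟩ ⟨h1, h2, h3, h4, h5⟩
    dsimp only at h1 h2 h3 h4 h5
    haveI : NeZero (d^2) := ⟨(pow_pos h1 2).ne'⟩
    have hd : t / d = d' := by rw [← h4]; exact Nat.mul_div_cancel_left _ h1
    simp only [φ, TT, Finset.mem_coe, Finset.mem_sigma, Finset.mem_filter, Nat.mem_divisors, mem_RR]
    refine ⟨⟨⟨⟨d', h4.symm⟩, ht.ne'⟩, by rw [hd]; exact h3⟩, ZMod.val_lt α, ?_⟩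
    rw [← ZMod.intCast_zmod_eq_zero_iff_dvd]
    have : α^3 + (a : ZMod (d^2))*α^2 + (b : ZMod (d^2))*α + (c : ZMod (d^2)) = 0 := h5
    unfold fz
    rw [← this]
    push_cast
    rw [ZMod.natCast_zmod_val]
  have hinj : Set.InjOn φ (TripSet a b c t) := by
    rintro ⟨d, d', α⟩ ⟨h1, h2, h3, h4, h5⟩ ⟨e, e', β⟩ ⟨k1, k2, k3, k4, k5⟩ h
    dsimp only at h1 h2 h3 h4 h5 k1 k2 k3 k4 k5
    simp only [φ, Sigma.mk.injEq, heq_eq_eq] at h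
    obtain ⟨rfl, h⟩ := h
    haveI : NeZero (d^2) := ⟨(pow_pos h1 2).ne'⟩
    have hα : α = β := ZMod.val_injective _ h
    have hd : d' = e' := Nat.eq_of_mul_eq_mul_left h1 (h4.trans k4.symm)
    rw [hα, hd]
  refine ⟨Set.Finite.of_injOn hmaps hinj (Finset.finite_toSet _), ?_⟩
  calc _ ≤ (TT a b c t : Set (Σ _ : ℕ, ℕ)).ncard :=
        Set.ncard_le_ncard_of_injOn φ hmaps hinj (Finset.finite_toSet _)
    _ = (TT a b c t).card := Set.ncard_coe_finset _
    _ ≤ _ := TT_card a b c hD t ht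
end
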